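/- For every positive integer n, there exists a bijection Φ from the set of permutations of {1,...,n} to itself such that for every permutation π: Φ(π)(1) = π(1), sign(Φ(π)) = sign(π), and depth(Φ(π)) = drp(π). -/

import Mathlib

open Finset

/-- The one-line notation value of `π` at position `k ∈ {1,…,n}`:
`oneLine π k = π(k)` with `1`-indexed positions and values. -/
def oneLine {n : ℕ} (π : Equiv.Perm (Fin n)) (k : ℕ) : ℕ :=
  if h : k - 1 < n then ((π ⟨k - 1, h⟩ : Fin n) : ℕ) + 1 else k

/-- `SUC(π) = {i ∈ {1,…,n-1} : π(i+1) = π(i)+1}` (position set). -/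
def SUC {n : ℕ} (π : Equiv.Perm (Fin n)) : Finset ℕ :=
  (Finset.Icc 1 (n - 1)).filter (fun i => oneLine π (i + 1) = oneLine π i + 1)

/-- `FIX(π) = {i ∈ {1,…,n-1} : π(i) = i}` (position set). -/
def FIX {n : ℕ} (π : Equiv.Perm (Fin n)) : Finset ℕ :=
  (Finset.Icc 1 (n - 1)).filter (fun i => oneLine π i = i)

/-- `Asc₂(π) = {π(i+1) : i ∈ {1,…,n-1}, π(i+1) ≥ π(i)+2}` (value set). -/
def Asc2 {n : ℕ} (π : Equiv.Perm (Fin n)) : Finset ℕ :=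
  ((Finset.Icc 1 (n - 1)).filter (fun i => oneLine π i + 2 ≤ oneLine π (i + 1))).image
    (fun i => oneLine π (i + 1))

/-- `Des(π) = {π(i+1) : i ∈ {1,…,n-1}, π(i) > π(i+1)}` (value set). -/
def DesSet {n : ℕ} (π : Equiv.Perm (Fin n)) : Finset ℕ :=
  ((Finset.Icc 1 (n - 1)).filter (fun i => oneLine π (i + 1) < oneLine π i)).image
    (fun i => oneLine π (i + 1))

/-- `Suc(π) = {π(i+1) : i ∈ {1,…,n-1}, π(i+1) = π(i)+1}` (value set). -/
def SucSet {n : ℕ} (π : Equiv.Perm (Fin n)) : Finset ℕ :=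
  ((Finset.Icc 1 (n - 1)).filter (fun i => oneLine π (i + 1) = oneLine π i + 1)).image
    (fun i => oneLine π (i + 1))

/-- `Aexc(π) = {π(i) : i ∈ {2,…,n}, π(i) < i}` (value set). -/
def Aexc {n : ℕ} (π : Equiv.Perm (Fin n)) : Finset ℕ :=
  ((Finset.Icc 2 n).filter (fun i => oneLine π i < i)).image (fun i => oneLine π i)

/-- `Êxc(π) = {π(i) : i ∈ {2,…,n}, π(i) > i}` (value set). -/
def ExcHat {n : ℕ} (π : Equiv.Perm (Fin n)) : Finset ℕ :=
  ((Finset.Icc 2 n).filter (fun i => i < oneLine π i)).image (fun i => oneLine π i)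

/-- `F̂ix(π) = {π(i) : i ∈ {2,…,n}, π(i) = i}` (value set). -/
def FixHat {n : ℕ} (π : Equiv.Perm (Fin n)) : Finset ℕ :=
  ((Finset.Icc 2 n).filter (fun i => oneLine π i = i)).image (fun i => oneLine π i)

/-- `depth(π) = ∑_{i : π(i) > i} (π(i) − i)`. -/
def depthStat {n : ℕ} (π : Equiv.Perm (Fin n)) : ℕ :=
  ∑ i ∈ (Finset.Icc 1 n).filter (fun i => i < oneLine π i), (oneLine π i - i)

/-- `drp(π) = ∑_{i ∈ {1,…,n-1} : π(i) > π(i+1)} (π(i) − π(i+1))`. -/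
def drpStat {n : ℕ} (π : Equiv.Perm (Fin n)) : ℕ :=
  ∑ i ∈ (Finset.Icc 1 (n - 1)).filter (fun i => oneLine π (i + 1) < oneLine π i),
    (oneLine π i - oneLine π (i + 1))

/-- `exc(π) = |{i ∈ {1,…,n} : π(i) > i}|`. -/
def excNum {n : ℕ} (π : Equiv.Perm (Fin n)) : ℕ :=
  ((Finset.Icc 1 n).filter (fun i => i < oneLine π i)).card

/-- `nexc(π) = |{i ∈ {1,…,n} : π(i) < i}|`. -/
def nexcNum {n : ℕ} (π : Equiv.Perm (Fin n)) : ℕ :=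
  ((Finset.Icc 1 n).filter (fun i => oneLine π i < i)).card

/-- `des(π) = |{i ∈ {1,…,n-1} : π(i) > π(i+1)}|`. -/
def desNum {n : ℕ} (π : Equiv.Perm (Fin n)) : ℕ :=
  ((Finset.Icc 1 (n - 1)).filter (fun i => oneLine π (i + 1) < oneLine π i)).card

/-- `asc(π) = |{i ∈ {1,…,n-1} : π(i) < π(i+1)}|`. -/
def ascNum {n : ℕ} (π : Equiv.Perm (Fin n)) : ℕ :=
  ((Finset.Icc 1 (n - 1)).filter (fun i => oneLine π i < oneLine π (i + 1))).card

/-- `inv(π) = |{(i,j) : 1 ≤ i < j ≤ n, π(i) > π(j)}|`. -/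
def invNum {n : ℕ} (π : Equiv.Perm (Fin n)) : ℕ :=
  (((Finset.Icc 1 n) ×ˢ (Finset.Icc 1 n)).filter
    (fun p : ℕ × ℕ => p.1 < p.2 ∧ oneLine π p.2 < oneLine π p.1)).card

open Polynomial in
/-- A family of polynomials, indexed by a weight `v` on the letters and a first letter `a`, that
satisfies the recursion obtained by deleting the letter `a`, with coefficient `c a`. -/
structure IsDeletionRecursive (c : ℕ → ℤ[X])
    (G : ∀ n, (Fin (n + 1) → ℕ) → Fin (n + 1) → ℤ[X]) : Prop where
  zero : ∀ v a, G 0 v a = 1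
  succ : ∀ n v, Monotone v → ∀ a, G (n + 1) v a =
    c a * ∑ b, X ^ (v a - v (a.succAbove b)) * G n (v ∘ a.succAbove) b

namespace IsDeletionRecursive

open Polynomial

variable {c c' : ℕ → ℤ[X]} {G G' : ∀ n, (Fin (n + 1) → ℕ) → Fin (n + 1) → ℤ[X]}

theorem ext_of_coeff_eq (hG : IsDeletionRecursive c G) (hG' : IsDeletionRecursive c G') (n : ℕ) :
    ∀ v, Monotone v → ∀ a, G n v a = G' n v a := by
  induction n with
  | zero => intro v _ a; rw [hG.zero, hG'.zero]
  | succ n ih =>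
    intro v hv a
    rw [hG.succ n v hv, hG'.succ n v hv]
    congr 1
    refine sum_congr rfl fun b _ => ?_
    rw [ih _ (hv.comp a.strictMono_succAbove.monotone)]

theorem apply_zero_eq_sum (hG : IsDeletionRecursive c G) (h0 : c 0 = 1) {n : ℕ}
    {v : Fin (n + 2) → ℕ} (hv : Monotone v) :
    G (n + 1) v 0 = ∑ b, G n (v ∘ Fin.succ) b := by
  rw [hG.succ n v hv]
  simp [h0, Nat.sub_eq_zero_of_le (hv (Fin.zero_le _)), Function.comp_def]

/-- The value at the first letter `0` does not depend on the weight of `0`. -/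
theorem apply_zero_congr (hG : IsDeletionRecursive c G) (h0 : c 0 = 1) {n : ℕ}
    {v w : Fin (n + 1) → ℕ} (hv : Monotone v) (hw : Monotone w)
    (h : ∀ i, i ≠ 0 → v i = w i) : G n v 0 = G n w 0 := by
  cases n with
  | zero => rw [hG.zero, hG.zero]
  | succ n =>
    rw [hG.apply_zero_eq_sum h0 hv, hG.apply_zero_eq_sum h0 hw]
    have : v ∘ Fin.succ = w ∘ Fin.succ := funext fun i => h _ (Fin.succ_ne_zero i)
    rw [this]

theorem signed_values (hG : IsDeletionRecursive c G) (h0 : c 0 = 1) (h1 : c 1 = -1) (n : ℕ) :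
    ∀ v, Monotone v → G (n + 1) v 1 = -(X ^ (v 1 - v 0) * G (n + 1) v 0) ∧
      ∀ a : Fin (n + 2), 2 ≤ (a : ℕ) → G (n + 1) v a = 0 := by
  induction n with
  | zero =>
    intro v hv
    refine ⟨?_, fun a ha => by omega⟩
    rw [hG.apply_zero_eq_sum h0 hv, hG.succ 0 v hv]
    simp [h1, hG.zero]
  | succ n ih =>
    intro v hv
    have sum_eq : ∀ w : Fin (n + 2) → ℕ, Monotone w → ∀ k : Fin (n + 2) → ℕ,
        ∑ b, X ^ k b * G (n + 1) w b =
          (X ^ k 0 - X ^ (k 1 + (w 1 - w 0))) * G (n + 1) w 0 := by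
      intro w hw k
      rw [Fin.sum_univ_succ, Fin.sum_univ_succ, sum_eq_zero]
      · rw [Fin.succ_zero_eq_one, (ih w hw).1]
        ring
      · intro i _
        rw [(ih w hw).2 _ (by simp), mul_zero]
    have mono : ∀ a : Fin (n + 3), Monotone (v ∘ a.succAbove) := fun a =>
      hv.comp a.strictMono_succAbove.monotone
    have above0 : ∀ a : Fin (n + 3), a ≠ 0 → a.succAbove 0 = 0 := fun a ha =>
      Fin.succAbove_ne_zero_zero ha
    have above1 : ∀ a : Fin (n + 3), 2 ≤ (a : ℕ) → a.succAbove 1 = 1 := by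
      intro a ha
      rw [Fin.succAbove_of_castSucc_lt _ _ (by simp [Fin.lt_def]; omega)]
      rfl
    have one_above1 : (1 : Fin (n + 3)).succAbove 1 = 2 := by
      rw [Fin.succAbove_of_le_castSucc _ _ (by simp)]
      rfl
    have v01 : v 0 ≤ v 1 := hv (Fin.zero_le _)
    have v12 : v 1 ≤ v 2 := hv <| by
      rw [← Fin.succ_zero_eq_one, ← Fin.succ_one_eq_two]
      exact Fin.succ_le_succ_iff.2 (Fin.zero_le _)
    constructor
    · have hcongr : G (n + 1) (v ∘ (1 : Fin (n + 3)).succAbove) 0 =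
          G (n + 1) (v ∘ (0 : Fin (n + 3)).succAbove) 0 := by
        refine hG.apply_zero_congr h0 (mono _) (mono _) fun i hi => ?_
        obtain ⟨j, rfl⟩ := Fin.exists_succ_eq.2 hi
        simp only [Function.comp_apply, Fin.succAbove_zero, ← Fin.succ_zero_eq_one,
          Fin.succ_succAbove_succ]
      rw [hG.succ _ v hv 0, hG.succ _ v hv 1,
        sum_eq _ (mono 1) (fun b => v 1 - v ((1 : Fin (n + 3)).succAbove b)),
        sum_eq _ (mono 0) (fun b => v 0 - v ((0 : Fin (n + 3)).succAbove b)), hcongr]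
      simp only [Function.comp_apply, above0 1 one_ne_zero, one_above1, Fin.succAbove_zero,
        Fin.succ_zero_eq_one, Fin.succ_one_eq_two, Fin.val_zero, Fin.val_one, h0, h1,
        Nat.sub_eq_zero_of_le v01, Nat.sub_eq_zero_of_le v12,
        Nat.sub_eq_zero_of_le (v01.trans v12)]
      rw [← Nat.sub_add_sub_cancel v12 v01]
      ring
    · intro a ha
      have ha0 : a ≠ 0 := by rintro rfl; simp at ha
      have v1a : v 1 ≤ v a := hv (by simp [Fin.le_def]; omega)
      rw [hG.succ _ v hv a, sum_eq _ (mono a) (fun b => v a - v (a.succAbove b))]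
      simp only [Function.comp_apply, above0 a ha0, above1 a ha,
        Nat.sub_add_sub_cancel v1a v01, sub_self, zero_mul, mul_zero]

/-- In the signed case only the coefficients of the letters `0` and `1` matter. -/
theorem ext_of_signed (hG : IsDeletionRecursive c G) (hG' : IsDeletionRecursive c' G')
    (h0 : c 0 = 1) (h1 : c 1 = -1) (h0' : c' 0 = 1) (h1' : c' 1 = -1) (n : ℕ) :
    ∀ v, Monotone v → ∀ a, G n v a = G' n v a := by
  induction n with
  | zero => intro v _ a; rw [hG.zero, hG'.zero]
  | succ n ih =>
    intro v hv a
    rcases le_or_gt 2 (a : ℕ) with ha | ha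
    · rw [(hG.signed_values h0 h1 n v hv).2 a ha, (hG'.signed_values h0' h1' n v hv).2 a ha]
    · rw [hG.succ n v hv, hG'.succ n v hv]
      have hc : c a = c' a := by
        interval_cases (a : ℕ)
        · rw [h0, h0']
        · rw [h1, h1']
      rw [hc]
      congr 1
      refine sum_congr rfl fun b _ => ?_
      rw [ih _ (hv.comp a.strictMono_succAbove.monotone)]

end IsDeletionRecursive

namespace Equiv.Perm

open Polynomial

/-- The permutation with first letter `a` whose remaining letters are ordered like `e`. -/
def consLetter {n : ℕ} (a : Fin (n + 1)) (e : Perm (Fin n)) : Perm (Fin (n + 1)) :=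
  a.cycleRange.symm * decomposeFin.symm (0, e)

@[simp]
theorem consLetter_zero {n : ℕ} (a : Fin (n + 1)) (e : Perm (Fin n)) : consLetter a e 0 = a := by
  simp [consLetter]

@[simp]
theorem consLetter_succ {n : ℕ} (a : Fin (n + 1)) (e : Perm (Fin n)) (i : Fin n) :
    consLetter a e i.succ = a.succAbove (e i) := by
  simp [consLetter]

theorem sign_consLetter {n : ℕ} (a : Fin (n + 1)) (e : Perm (Fin n)) :
    sign (consLetter a e) = (-1) ^ (a : ℕ) * sign e := by
  simp [consLetter, sign_mul]

theorem consLetter_injective {n : ℕ} (a : Fin (n + 1)) : Function.Injective (consLetter a) := by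
  intro e e' h
  ext i : 1
  simpa using congrArg (fun σ => σ i.succ) h

theorem exists_consLetter_eq {n : ℕ} (σ : Perm (Fin (n + 1))) : ∃ e, consLetter (σ 0) e = σ := by
  obtain ⟨⟨p, e⟩, he⟩ := decomposeFin.symm.surjective ((σ 0).cycleRange * σ)
  have hp : p = 0 := by simpa using congrArg (fun τ => τ 0) he
  subst hp
  refine ⟨e, ?_⟩
  rw [consLetter, he]
  ext i
  simp

theorem sum_filter_apply_zero {n : ℕ} {M : Type*} [AddCommMonoid M] (a : Fin (n + 1))
    (F : Perm (Fin (n + 1)) → M) :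
    ∑ σ with σ 0 = a, F σ = ∑ e : Perm (Fin n), F (consLetter a e) := by
  refine (sum_bij (fun e _ => consLetter a e) (by simp)
    (fun e _ e' _ h => consLetter_injective a h) ?_ (fun _ _ => rfl)).symm
  intro σ hσ
  obtain ⟨e, he⟩ := exists_consLetter_eq σ
  rw [(mem_filter.1 hσ).2] at he
  exact ⟨e, mem_univ _, he⟩

/-- The sum of the drops of the word `v (σ 0), v (σ 1), …`. -/
def dropSum {n : ℕ} (v : Fin (n + 1) → ℕ) (σ : Perm (Fin (n + 1))) : ℕ :=
  ∑ i : Fin n, (v (σ i.castSucc) - v (σ i.succ))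

/-- The sum of the differences `v i - v (σ i)` over the anti-excedances of `σ`. -/
def antiexcSum {n : ℕ} (v : Fin (n + 1) → ℕ) (σ : Perm (Fin (n + 1))) : ℕ :=
  ∑ i, (v i - v (σ i))

/-- The generating polynomial of the statistic `W`, twisted by a character `f` of the sign, over
the permutations with first letter `a`. -/
noncomputable def genPoly (f : ℤˣ →* ℤ)
    (W : ∀ n, (Fin (n + 1) → ℕ) → Perm (Fin (n + 1)) → ℕ)
    (n : ℕ) (v : Fin (n + 1) → ℕ) (a : Fin (n + 1)) : ℤ[X] :=
  ∑ σ with σ 0 = a, C (f (sign σ)) * X ^ W n v σ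

theorem genPoly_zero (f : ℤˣ →* ℤ) {W : ∀ n, (Fin (n + 1) → ℕ) → Perm (Fin (n + 1)) → ℕ}
    (hW : ∀ v, W 0 v 1 = 0) (v : Fin 1 → ℕ) (a : Fin 1) : genPoly f W 0 v a = 1 := by
  have h : consLetter a default = 1 := Equiv.ext fun i => by lia
  rw [genPoly, sum_filter_apply_zero, Fintype.sum_unique, h]
  simp [hW]

theorem isDeletionRecursive_dropSum (f : ℤˣ →* ℤ) :
    IsDeletionRecursive (fun a => C (f ((-1) ^ a))) (genPoly f fun _ => dropSum) where
  zero := genPoly_zero f fun v => by simp [dropSum]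
  succ n v _ a := by
    rw [genPoly, sum_filter_apply_zero, ← sum_fiberwise univ (fun e : Perm (Fin (n + 1)) => e 0),
      mul_sum]
    refine sum_congr rfl fun b _ => ?_
    rw [genPoly, mul_sum, mul_sum]
    refine sum_congr rfl fun e he => ?_
    have hdrop : dropSum v (consLetter a e) =
        (v a - v (a.succAbove b)) + dropSum (v ∘ a.succAbove) e := by
      rw [← (mem_filter.1 he).2, dropSum, Fin.sum_univ_succ]
      simp only [dropSum, Fin.castSucc_zero, ← Fin.succ_castSucc, consLetter_zero,
        consLetter_succ, Function.comp_apply]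
    rw [hdrop, sign_consLetter, map_mul, C_mul, pow_add]
    ring

theorem antiexcSum_consLetter_succ_mul_cycleRange {n : ℕ} {v : Fin (n + 2) → ℕ} (hv : Monotone v)
    (c : Fin (n + 1)) (e : Perm (Fin (n + 1))) :
    antiexcSum v (consLetter c.succ (e * c.cycleRange)) =
      (v c.succ - v (c.succ.succAbove (e 0))) + antiexcSum (v ∘ c.succ.succAbove) e := by
  rw [antiexcSum, antiexcSum, Fin.sum_univ_succ, ← Equiv.sum_comp c.cycleRange.symm,
    Fin.sum_univ_succ, Fin.sum_univ_succ (n := n)]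
  simp [Nat.sub_eq_zero_of_le (hv (Fin.zero_le _))]

theorem antiexcSum_consLetter_zero {n : ℕ} {v : Fin (n + 2) → ℕ} (e : Perm (Fin (n + 1))) :
    antiexcSum v (consLetter 0 e) = antiexcSum (v ∘ Fin.succ) e := by
  rw [antiexcSum, antiexcSum, Fin.sum_univ_succ]
  simp

theorem isDeletionRecursive_antiexcSum (f : ℤˣ →* ℤ) :
    IsDeletionRecursive (fun a => if a = 0 then 1 else C (f (-1)))
      (genPoly f fun _ => antiexcSum) where
  zero := genPoly_zero f fun v => by simp [antiexcSum]
  succ n v hv a := by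
    rw [genPoly, sum_filter_apply_zero]
    cases a using Fin.cases with
    | zero =>
      rw [← sum_fiberwise univ (fun e : Perm (Fin (n + 1)) => e 0), mul_sum]
      refine sum_congr rfl fun b _ => ?_
      rw [genPoly, mul_sum, mul_sum]
      refine sum_congr rfl fun e _ => ?_
      simp [antiexcSum_consLetter_zero, sign_consLetter, Function.comp_def,
        Nat.sub_eq_zero_of_le (hv (Fin.zero_le _))]
    | succ c =>
      rw [← Equiv.sum_comp (Equiv.mulRight c.cycleRange),
        ← sum_fiberwise univ (fun e : Perm (Fin (n + 1)) => e 0), mul_sum]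
      refine sum_congr rfl fun b _ => ?_
      rw [genPoly, mul_sum, mul_sum]
      refine sum_congr rfl fun e he => ?_
      have hsign : sign (consLetter c.succ (e * c.cycleRange)) = -1 * sign e := by
        rw [sign_consLetter, sign_mul, Fin.sign_cycleRange, Fin.val_succ, mul_comm (sign e),
          ← mul_assoc, ← pow_add, Odd.neg_one_pow ⟨c, by ring⟩]
      rw [Equiv.coe_mulRight, antiexcSum_consLetter_succ_mul_cycleRange hv, hsign,
        (mem_filter.1 he).2, map_mul, C_mul, pow_add, if_neg (by simp)]
      ring

theorem genPoly_dropSum_eq_one (n : ℕ) {v : Fin (n + 1) → ℕ} (hv : Monotone v)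
    (a : Fin (n + 1)) :
    genPoly 1 (fun _ => dropSum) n v a = genPoly 1 (fun _ => antiexcSum) n v a := by
  refine (isDeletionRecursive_dropSum 1).ext_of_coeff_eq ?_ n v hv a
  simpa using isDeletionRecursive_antiexcSum 1

theorem genPoly_dropSum_eq_sign (n : ℕ) {v : Fin (n + 1) → ℕ} (hv : Monotone v)
    (a : Fin (n + 1)) :
    genPoly (Units.coeHom ℤ) (fun _ => dropSum) n v a =
      genPoly (Units.coeHom ℤ) (fun _ => antiexcSum) n v a :=
  (isDeletionRecursive_dropSum _).ext_of_signed (isDeletionRecursive_antiexcSum _)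
    (by simp) (by simp) (by simp) (by simp) n v hv a

theorem coeff_genPoly (f : ℤˣ →* ℤ) (W : ∀ n, (Fin (n + 1) → ℕ) → Perm (Fin (n + 1)) → ℕ)
    (n : ℕ) (v : Fin (n + 1) → ℕ) (a : Fin (n + 1)) (d : ℕ) :
    (genPoly f W n v a).coeff d = ∑ σ with σ 0 = a ∧ W n v σ = d, f (sign σ) := by
  rw [genPoly, finsetSum_coeff, ← filter_filter, sum_filter (fun σ => W n v σ = d)]
  simp [coeff_X_pow, eq_comm]

theorem two_mul_card_filter_sign (n : ℕ) (W : ∀ n, (Fin (n + 1) → ℕ) → Perm (Fin (n + 1)) → ℕ)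
    (v : Fin (n + 1) → ℕ) (a : Fin (n + 1)) (s : ℤˣ) (d : ℕ) :
    2 * (#{σ : Perm (Fin (n + 1)) | (σ 0, sign σ, W n v σ) = (a, s, d)} : ℤ) =
      (genPoly 1 W n v a).coeff d + s * (genPoly (Units.coeHom ℤ) W n v a).coeff d := by
  rw [coeff_genPoly, coeff_genPoly, mul_sum, ← sum_add_distrib]
  have hfilter : ({σ : Perm (Fin (n + 1)) | (σ 0, sign σ, W n v σ) = (a, s, d)} : Finset _) =
      ({σ | σ 0 = a ∧ W n v σ = d} : Finset _).filter (fun σ => sign σ = s) := by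
    ext σ
    simp only [mem_filter, mem_univ, true_and, Prod.mk.injEq]
    tauto
  rw [hfilter, card_filter, Nat.cast_sum, mul_sum]
  refine sum_congr rfl fun σ _ => ?_
  rcases Int.units_eq_one_or s with rfl | rfl <;>
    rcases Int.units_eq_one_or (sign σ) with h | h <;> rw [h] <;> simp

theorem exists_equiv_dropSum_antiexcSum (n : ℕ) {v : Fin (n + 1) → ℕ} (hv : Monotone v) :
    ∃ Φ : Perm (Fin (n + 1)) ≃ Perm (Fin (n + 1)), ∀ σ,
      (Φ σ 0, sign (Φ σ), antiexcSum v (Φ σ)) = (σ 0, sign σ, dropSum v σ) := by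
  have hcard : ∀ t : Fin (n + 1) × ℤˣ × ℕ,
      Nonempty ({σ // (σ 0, sign σ, dropSum v σ) = t} ≃
        {σ : Perm (Fin (n + 1)) // (σ 0, sign σ, antiexcSum v σ) = t}) := by
    rintro ⟨a, s, d⟩
    refine ⟨Fintype.equivOfCardEq ?_⟩
    rw [Fintype.card_subtype, Fintype.card_subtype]
    have h := two_mul_card_filter_sign n (fun _ => dropSum) v a s d
    rw [genPoly_dropSum_eq_one n hv, genPoly_dropSum_eq_sign n hv,
      ← two_mul_card_filter_sign n (fun _ => antiexcSum) v a s d] at h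
    exact_mod_cast mul_left_cancel₀ two_ne_zero h
  exact ⟨Equiv.ofFiberEquiv fun t => (hcard t).some, Equiv.ofFiberEquiv_map
    (f := fun σ => (σ 0, sign σ, dropSum v σ)) (g := fun σ => (σ 0, sign σ, antiexcSum v σ)) _⟩

/-- The differences over the excedances and over the anti-excedances have the same total. -/
theorem antiexcSum_eq_sum_sub {n : ℕ} (v : Fin (n + 1) → ℕ) (σ : Perm (Fin (n + 1))) :
    antiexcSum v σ = ∑ i, (v (σ i) - v i) := by
  have h : ∑ i, ((v i - v (σ i)) + v (σ i)) = ∑ i, ((v (σ i) - v i) + v i) :=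
    sum_congr rfl fun i _ => by omega
  rw [sum_add_distrib, sum_add_distrib, Equiv.sum_comp σ v] at h
  exact Nat.add_right_cancel h

end Equiv.Perm

theorem oneLine_succ {n : ℕ} (π : Equiv.Perm (Fin n)) (i : Fin n) :
    oneLine π (i + 1) = π i + 1 := by
  simp [oneLine]

@[to_additive]
theorem prod_Icc_eq_prod_fin {M : Type*} [CommMonoid M] (n : ℕ) (F : ℕ → M) :
    ∏ i ∈ Icc 1 n, F i = ∏ i : Fin n, F (i + 1) := by
  rw [Fin.prod_univ_eq_prod_range (fun i => F (i + 1)), range_eq_Ico, prod_Ico_add' F 0 n 1]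
  rfl

theorem depthStat_eq_antiexcSum {n : ℕ} (π : Equiv.Perm (Fin (n + 1))) :
    depthStat π = Equiv.Perm.antiexcSum Fin.val π := by
  rw [Equiv.Perm.antiexcSum_eq_sum_sub, depthStat, sum_filter, sum_Icc_eq_sum_fin]
  refine sum_congr rfl fun i _ => ?_
  rw [oneLine_succ]
  split_ifs <;> omega

theorem drpStat_eq_dropSum {n : ℕ} (π : Equiv.Perm (Fin (n + 1))) :
    drpStat π = Equiv.Perm.dropSum Fin.val π := by
  rw [drpStat, sum_filter, Nat.add_sub_cancel, sum_Icc_eq_sum_fin, Equiv.Perm.dropSum]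
  refine sum_congr rfl fun i _ => ?_
  have h1 := oneLine_succ π i.castSucc
  have h2 := oneLine_succ π i.succ
  rw [Fin.val_castSucc] at h1
  rw [Fin.val_succ] at h2
  rw [h1, h2]
  split_ifs <;> omega

theorem neg_one_pow_invNum {n : ℕ} (π : Equiv.Perm (Fin n)) :
    (-1 : ℤ) ^ invNum π = Equiv.Perm.sign π := by
  rw [Equiv.Perm.sign_eq_prod_prod_Iio, invNum, ← prod_const, prod_filter, prod_product_right,
    prod_Icc_eq_prod_fin, Units.coe_prod]
  refine prod_congr rfl fun j _ => ?_
  rw [prod_Icc_eq_prod_fin, Units.coe_prod]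
  have hIio : Iio j = ({i | i < j} : Finset (Fin n)) := by ext; simp
  rw [hIio, prod_filter]
  refine prod_congr rfl fun i _ => ?_
  have hne : i < j → (π i : ℕ) ≠ π j := fun h => by simpa [Fin.val_inj] using h.ne
  simp only [oneLine_succ, Fin.lt_def, add_lt_add_iff_right] at hne ⊢
  split_ifs <;> first | rfl | omega

/-- there is a bijection Φ of 𝔖ₙ preserving the first letter and the sign,
carrying drp to depth: depth(Φ(π)) = drp(π). -/
theorem stmt9 (n : ℕ) (hn : 0 < n) :
    ∃ Φ : Equiv.Perm (Fin n) → Equiv.Perm (Fin n), Function.Bijective Φ ∧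
      ∀ π : Equiv.Perm (Fin n),
        oneLine (Φ π) 1 = oneLine π 1 ∧
        ((-1 : ℤ) ^ invNum (Φ π) = (-1 : ℤ) ^ invNum π) ∧
        depthStat (Φ π) = drpStat π := by
  obtain ⟨m, rfl⟩ := Nat.exists_eq_add_of_lt hn
  rw [zero_add]
  obtain ⟨Φ, hΦ⟩ := Equiv.Perm.exists_equiv_dropSum_antiexcSum m (v := Fin.val)
    fun _ _ h => h
  refine ⟨Φ, Φ.bijective, fun π => ?_⟩
  obtain ⟨hfirst, hsign, hstat⟩ : Φ π 0 = π 0 ∧ _ ∧ _ := by simpa only [Prod.mk.injEq] using hΦ π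
  refine ⟨?_, ?_, ?_⟩
  · have h := fun σ : Equiv.Perm (Fin (m + 1)) => oneLine_succ σ 0
    rw [Fin.val_zero, zero_add] at h
    rw [h, h, hfirst]
  · rw [neg_one_pow_invNum, neg_one_pow_invNum, hsign]
  · rw [depthStat_eq_antiexcSum, drpStat_eq_dropSum, hstat]
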